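/- (Theorem 1, existence form) Let S be a sample over a nonempty set P of propositional variables, Ω a weight function on the traces of S with Σ_{(u,b)∈S} Ω(u) = 1 and Ω(u) > 0 for all traces, and κ a real number with 0 ≤ κ ≤ 1. Then there exists an LTLf formula φ such that wl(S,φ,Ω) ≤ κ and |φ| ≤ |ψ| for every LTLf formula ψ with wl(S,ψ,Ω) ≤ κ; that is, a size-minimal formula achieving weighted loss at most κ exists. -/

import Mathlib

/-- Syntax of LTLf formulas over propositional variables `P`:
`φ ::= p | ¬φ | φ ∨ φ | X φ | φ U φ`. -/
inductive LTL (P : Type) : Type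
  | atom : P → LTL P
  | neg  : LTL P → LTL P
  | disj : LTL P → LTL P → LTL P
  | next : LTL P → LTL P
  | untl : LTL P → LTL P → LTL P

open Classical in
/-- The valuation `V(φ, u, i) ∈ {0,1}` of an LTLf formula on a finite trace
`u : List (Set P)` at position `i`. -/
noncomputable def Val {P : Type} : LTL P → List (Set P) → ℕ → ℕ
  | .atom p, u, i => if p ∈ u.getD i ∅ then 1 else 0
  | .neg φ, u, i => 1 - Val φ u i
  | .disj φ ψ, u, i => max (Val φ u i) (Val ψ u i)
  | .next φ, u, i => if i + 1 < u.length ∧ Val φ u (i + 1) = 1 then 1 else 0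
  | .untl φ ψ, u, i =>
      if ∃ j, i ≤ j ∧ j < u.length ∧ Val ψ u j = 1 ∧
          ∀ k, i ≤ k → k < j → Val φ u k = 1 then 1 else 0

/-- The weighted loss `wl(S,φ,Ω) = Σ_{(u,b)∈S} Ω(u)·|V(u⊨φ) − b|`. -/
noncomputable def wloss {P : Type} (S : Finset (List (Set P) × ℕ)) (φ : LTL P)
    (Ω : List (Set P) → ℝ) : ℝ :=
  ∑ x ∈ S, Ω x.1 * |(Val φ x.1 0 : ℝ) - (x.2 : ℝ)|

/-- The set of subformulas of an LTLf formula. -/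
def subf {P : Type} : LTL P → Set (LTL P)
  | .atom p => {.atom p}
  | .neg φ => insert (.neg φ) (subf φ)
  | .disj φ ψ => insert (.disj φ ψ) (subf φ ∪ subf ψ)
  | .next φ => insert (.next φ) (subf φ)
  | .untl φ ψ => insert (.untl φ ψ) (subf φ ∪ subf ψ)

/-- The size `|φ|` of an LTLf formula: the number of its distinct subformulas. -/
noncomputable def size {P : Type} (φ : LTL P) : ℕ := (subf φ).ncard

lemma val_le {P : Type} (φ : LTL P) (u : List (Set P)) (i : ℕ) : Val φ u i ≤ 1 := by
  induction φ generalizing i with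
  | atom p => simp only [Val]; split_ifs <;> simp
  | neg φ ih => simp only [Val]; omega
  | disj φ ψ ih1 ih2 => simp only [Val]; exact max_le (ih1 i) (ih2 i)
  | next φ ih => simp only [Val]; split_ifs <;> simp
  | untl φ ψ ih1 ih2 => simp only [Val]; split_ifs <;> simp

/-- Iterated next operator. -/
def nextIter {P : Type} (φ : LTL P) : ℕ → LTL P
  | 0 => φ
  | n + 1 => .next (nextIter φ n)

lemma val_nextIter {P : Type} (φ : LTL P) (u : List (Set P)) (n i : ℕ) (hi : i < u.length) :
    Val (nextIter φ n) u i = 1 ↔ i + n < u.length ∧ Val φ u (i + n) = 1 := by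
  induction n generalizing i with
  | zero => simp [nextIter, hi]
  | succ n ih =>
    simp only [nextIter, Val]
    by_cases h : i + 1 < u.length
    · have e : i + 1 + n = i + (n + 1) := by omega
      have := ih (i + 1) h
      rw [e] at this
      simp [h, this]
    · have h2 : ¬ (i + (n + 1) < u.length) := by omega
      simp [h, h2]

/-- The always true formula. -/
def topF {P : Type} (p : P) : LTL P := .disj (.atom p) (.neg (.atom p))

lemma val_topF {P : Type} (p : P) (u : List (Set P)) (i : ℕ) : Val (topF p) u i = 1 := by
  simp only [topF, Val]; split_ifs <;> simp

lemma sep_len {P : Type} [Nonempty P] (u v : List (Set P)) (hu : u ≠ []) (hv : v ≠ [])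
    (h : v.length < u.length) : ∃ φ : LTL P, Val φ u 0 ≠ Val φ v 0 := by
  obtain ⟨p⟩ := ‹Nonempty P›
  refine ⟨nextIter (topF p) v.length, fun he => ?_⟩
  have h1 := (val_nextIter (topF p) u v.length 0 (List.length_pos_iff.2 hu)).2
    ⟨by omega, val_topF _ _ _⟩
  rw [he] at h1
  have h2 := (val_nextIter (topF p) v v.length 0 (List.length_pos_iff.2 hv)).1 h1
  omega

lemma sep_ne {P : Type} [Nonempty P] (u v : List (Set P)) (hu : u ≠ []) (hv : v ≠ [])
    (h : u ≠ v) : ∃ φ : LTL P, Val φ u 0 ≠ Val φ v 0 := by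
  rcases lt_trichotomy v.length u.length with hl | hl | hl
  · exact sep_len u v hu hv hl
  · by_contra! hc
    apply h
    apply List.ext_getElem hl.symm
    intro i h1 h2
    ext p
    have e := hc (nextIter (.atom p) i)
    have a := val_nextIter (.atom p) u i 0 (List.length_pos_iff.2 hu)
    have b := val_nextIter (.atom p) v i 0 (List.length_pos_iff.2 hv)
    rw [e, b] at a
    simpa [Val, h1, h2] using a.symm
  · obtain ⟨φ, hφ⟩ := sep_len v u hv hu hl
    exact ⟨φ, hφ.symm⟩

lemma sep {P : Type} [Nonempty P] (u v : List (Set P)) (hu : u ≠ []) (hv : v ≠ [])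
    (h : u ≠ v) : ∃ φ : LTL P, Val φ u 0 = 1 ∧ Val φ v 0 = 0 := by
  obtain ⟨φ, hφ⟩ := sep_ne u v hu hv h
  have a := val_le φ u 0
  have b := val_le φ v 0
  by_cases c : Val φ u 0 = 1
  · exact ⟨φ, c, by omega⟩
  · exact ⟨.neg φ, by simp only [Val]; omega, by simp only [Val]; omega⟩

lemma sep_one {P : Type} [Nonempty P] (u : List (Set P)) (hu : u ≠ [])
    (B : Finset (List (Set P))) (hB : ∀ v ∈ B, v ≠ [] ∧ u ≠ v) :
    ∃ φ : LTL P, Val φ u 0 = 1 ∧ ∀ v ∈ B, Val φ v 0 = 0 := by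
  classical
  induction B using Finset.induction_on with
  | empty =>
    obtain ⟨p⟩ := ‹Nonempty P›
    exact ⟨topF p, val_topF _ _ _, by simp⟩
  | insert w B hw ih =>
    obtain ⟨φ, h1, h2⟩ := ih (fun v hv => hB v (Finset.mem_insert_of_mem hv))
    obtain ⟨hw1, hw2⟩ := hB w (Finset.mem_insert_self _ _)
    obtain ⟨ψ, h3, h4⟩ := sep u w hu hw1 hw2
    refine ⟨.neg (.disj (.neg φ) (.neg ψ)), by simp [Val, h1, h3], fun v hv => ?_⟩
    rcases Finset.mem_insert.1 hv with rfl | hv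
    · simp [Val, h4]
    · simp [Val, h2 v hv]

lemma sep_all {P : Type} [Nonempty P] (A B : Finset (List (Set P)))
    (hA : ∀ u ∈ A, u ≠ []) (hB : ∀ v ∈ B, v ≠ []) (hAB : ∀ u ∈ A, ∀ v ∈ B, u ≠ v) :
    ∃ φ : LTL P, (∀ u ∈ A, Val φ u 0 = 1) ∧ ∀ v ∈ B, Val φ v 0 = 0 := by
  classical
  induction A using Finset.induction_on with
  | empty =>
    obtain ⟨p⟩ := ‹Nonempty P›
    exact ⟨.neg (topF p), by simp, fun v _ => by simp [Val, val_topF]⟩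
  | insert w A hw ih =>
    obtain ⟨φ, h1, h2⟩ := ih (fun v hv => hA v (Finset.mem_insert_of_mem hv))
      (fun v hv => hAB v (Finset.mem_insert_of_mem hv))
    have hm := Finset.mem_insert_self w A
    obtain ⟨ψ, h3, h4⟩ := sep_one w (hA w hm) B (fun v hv => ⟨hB v hv, hAB w hm v hv⟩)
    refine ⟨.disj φ ψ, fun v hv => ?_, fun v hv => by simp [Val, h2 v hv, h4 v hv]⟩
    have a := val_le φ v 0
    have b := val_le ψ v 0
    simp only [Val]
    rcases Finset.mem_insert.1 hv with rfl | hv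
    · omega
    · have := h1 v hv
      omega

/-- (Theorem 1, existence form.) For any sample over a nonempty `P`, any
strictly positive weight function summing to `1`, and any `0 ≤ κ ≤ 1`, there
exists a size-minimal LTLf formula with weighted loss at most `κ`. -/
theorem exists_minimal_formula {P : Type} [Nonempty P]
    (S : Finset (List (Set P) × ℕ)) (hS : S.Nonempty)
    (hlab : ∀ x ∈ S, x.2 = 0 ∨ x.2 = 1)
    (hfun : ∀ u b₁ b₂, (u, b₁) ∈ S → (u, b₂) ∈ S → b₁ = b₂)
    (hne : ∀ x ∈ S, x.1 ≠ [])
    (Ω : List (Set P) → ℝ) (hΩpos : ∀ x ∈ S, 0 < Ω x.1)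
    (hΩ1 : ∑ x ∈ S, Ω x.1 = 1)
    (κ : ℝ) (hκ0 : 0 ≤ κ) (hκ1 : κ ≤ 1) :
    ∃ φ : LTL P, wloss S φ Ω ≤ κ ∧
      ∀ ψ : LTL P, wloss S ψ Ω ≤ κ → size φ ≤ size ψ := by
  classical
  obtain ⟨φ, h1, h0⟩ := sep_all ((S.filter (fun x => x.2 = 1)).image Prod.fst)
    ((S.filter (fun x => x.2 = 0)).image Prod.fst)
    (by
      intro u hu
      obtain ⟨x, hx, rfl⟩ := Finset.mem_image.1 hu
      exact hne x (Finset.mem_filter.1 hx).1)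
    (by
      intro u hu
      obtain ⟨x, hx, rfl⟩ := Finset.mem_image.1 hu
      exact hne x (Finset.mem_filter.1 hx).1)
    (by
      intro u hu v hv huv
      obtain ⟨⟨x, b⟩, hx, rfl⟩ := Finset.mem_image.1 hu
      obtain ⟨⟨y, c⟩, hy, rfl⟩ := Finset.mem_image.1 hv
      obtain ⟨hx, hb⟩ := Finset.mem_filter.1 hx
      obtain ⟨hy, hc⟩ := Finset.mem_filter.1 hy
      dsimp only at huv hb hc
      subst huv
      have := hfun _ _ _ hx hy
      omega)
  have hz : wloss S φ Ω = 0 := by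
    apply Finset.sum_eq_zero
    intro x hx
    rcases hlab x hx with h | h
    · rw [h0 x.1 (Finset.mem_image_of_mem _ (Finset.mem_filter.2 ⟨hx, h⟩)), h]; simp
    · rw [h1 x.1 (Finset.mem_image_of_mem _ (Finset.mem_filter.2 ⟨hx, h⟩)), h]; simp
  obtain ⟨m, hm, hmin⟩ := (measure (size (P := P))).wf.has_min
    {ψ : LTL P | wloss S ψ Ω ≤ κ} ⟨φ, by simp [hz, hκ0]⟩
  exact ⟨m, hm, fun ψ hψ => not_lt.1 (hmin ψ hψ)⟩
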